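/- If u is a positive solution of ∂_t u = Δu on a graph, and at a point (x₀,t₀) one has Δu(x₀,t₀) = 0 and t ↦ |Δu|(x₀,t) is differentiable at t₀, then (Δ − ∂_t)|Δu|(x₀,t₀) ≥ 0. -/

import Mathlib

open Real Finset MeasureTheory

variable {V : Type*}

/-- The μ-Laplacian of a weighted graph. -/
noncomputable def lapl (N : V → Finset V) (w : V → V → ℝ) (μ : V → ℝ)
    (f : V → ℝ) (x : V) : ℝ :=
  (1 / μ x) * ∑ y ∈ N x, w x y * (f y - f x)

/-- The carré du champ operator Γ. -/
noncomputable def gam (N : V → Finset V) (w : V → V → ℝ) (μ : V → ℝ)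
    (f g : V → ℝ) (x : V) : ℝ :=
  (1 / (2 * μ x)) * ∑ y ∈ N x, w x y * (f y - f x) * (g y - g x)

/-- The weighted degree. -/
noncomputable def deg (N : V → Finset V) (w : V → V → ℝ) (x : V) : ℝ :=
  ∑ y ∈ N x, w x y

/-- The operator Γ̃₂ of Bauer et al. -/
noncomputable def gam2 (N : V → Finset V) (w : V → V → ℝ) (μ : V → ℝ)
    (f : V → ℝ) (x : V) : ℝ :=
  (1 / 2) * lapl N w μ (gam N w μ f f) x
    - gam N w μ f (fun y => lapl N w μ (fun z => f z ^ 2) y / (2 * f y)) x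

theorem abs_lap_supersolution_at_zero
    (N : V → Finset V) (w : V → V → ℝ) (μ : V → ℝ)
    (hμ : ∀ x, 0 < μ x) (hw : ∀ x y, y ∈ N x → 0 < w x y)
    (u : V → ℝ → ℝ) (hu : ∀ x t, 0 < u x t)
    (hheat : ∀ x t, HasDerivAt (u x) (lapl N w μ (fun y => u y t) x) t)
    (x₀ : V) (t₀ D : ℝ)
    (hD : HasDerivAt (fun t => |lapl N w μ (fun y => u y t) x₀|) D t₀)
    (h0 : lapl N w μ (fun y => u y t₀) x₀ = 0) :
    0 ≤ lapl N w μ (fun y => |lapl N w μ (fun z => u z t₀) y|) x₀ - D := by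
  have hmin : IsLocalMin (fun t => |lapl N w μ (fun y => u y t) x₀|) t₀ := by
    refine Filter.Eventually.of_forall fun t => ?_
    simp only [h0, abs_zero]
    exact abs_nonneg _
  have hD0 : D = 0 := hmin.hasDerivAt_eq_zero hD
  rw [hD0, sub_zero]
  have key : ∀ g : V → ℝ, g x₀ = 0 → 0 ≤ lapl N w μ (fun y => |g y|) x₀ := by
    intro g hg
    unfold lapl
    refine mul_nonneg (one_div_nonneg.mpr (hμ x₀).le) (Finset.sum_nonneg fun y hy => ?_)
    refine mul_nonneg (hw x₀ y hy).le ?_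
    simp [hg]
  exact key _ h0
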